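/- arXiv:1909.08497 — 10 statements merged into one kernel-verified Lean document; each statement's English description precedes it below -/
import Mathlib

section
/- Let Σ be a D×D real positive definite matrix, let M be a D×L real matrix of rank L (with D ≥ L), let i ∈ {1,…,L} and d ∈ ℝ. Consider the function (Δ, Σ̂) ↦ tr(Σ̂⁻¹ Σ) + (MΔ)ᵀ Σ̂⁻¹ (MΔ) + log det Σ̂ on the set of pairs where Δ ∈ ℝ^L satisfies Δ_i = d and Σ̂ is a D×D positive definite matrix. This function has a unique global minimizer (Δ*, Σ̂*), given by Δ*_j = ([(MᵀΣ⁻¹M)⁻¹]_{ji} / [(MᵀΣ⁻¹M)⁻¹]_{ii}) · d for every j, and Σ̂* = Σ + (MΔ*)(MΔ*)ᵀ. -/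
open Matrix BigOperators

/-!
For a fixed vector `v = MΔ`, the objective is `tr (Σ̂⁻¹ T) + log det Σ̂` with `T = Σ + v vᵀ`.
Gibbs' inequality for centred Gaussians (`gibbs`) says that this is minimal exactly at `Σ̂ = T`,
with value `D + log det T`; after factoring `Σ̂⁻¹ = Bᵀ B` it reduces to `log x ≤ x - 1` for the
eigenvalues of `B T Bᵀ`. By the matrix determinant lemma, `det T = det Σ · (1 + Δᵀ A Δ)` with
`A = Mᵀ Σ⁻¹ M`, so what remains is to minimise the quadratic form `Δᵀ A Δ` on the hyperplane
`Δ i = d` (`quad_lt`). There `Δ*` is optimal because `A Δ*` is a multiple of the basis vector `e_i`,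
hence orthogonal to every admissible perturbation.
-/

/-- The scalar inequality `log x ≤ x - 1`, summed over the eigenvalues of `Q`; strict unless all of
them equal `1`. -/
lemma log_det_lt_trace {n : ℕ} {Q : Matrix (Fin n) (Fin n) ℝ} (hQ : Q.PosDef) (h1 : Q ≠ 1) :
    n + Real.log Q.det < Q.trace := by
  have hev : ∃ k, hQ.1.eigenvalues k ≠ 1 := by
    by_contra! h
    apply h1
    have h2 : (RCLike.ofReal ∘ hQ.1.eigenvalues : Fin n → ℝ) = fun _ => 1 := by
      funext k; simp [h k]
    rw [hQ.1.spectral_theorem, h2, Matrix.diagonal_one, map_one]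
  have hdet : Q.det = ∏ k, hQ.1.eigenvalues k := by
    simpa using hQ.1.det_eq_prod_eigenvalues
  have htr : Q.trace = ∑ k, hQ.1.eigenvalues k := by
    simpa using hQ.1.trace_eq_sum_eigenvalues
  rw [hdet, htr, Real.log_prod (fun k _ => (hQ.eigenvalues_pos k).ne')]
  have hlt : ∑ k, Real.log (hQ.1.eigenvalues k) < ∑ k, (hQ.1.eigenvalues k - 1) := by
    obtain ⟨k, hk⟩ := hev
    exact Finset.sum_lt_sum
      (fun j _ => Real.log_le_sub_one_of_pos (hQ.eigenvalues_pos j))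
      ⟨k, Finset.mem_univ k, Real.log_lt_sub_one_of_pos (hQ.eigenvalues_pos k) hk⟩
  simp only [Finset.sum_sub_distrib, Finset.sum_const, Finset.card_univ, Fintype.card_fin,
    nsmul_eq_mul, mul_one] at hlt
  linarith

open scoped MatrixOrder in
lemma exists_factor_inv {n : ℕ} {P : Matrix (Fin n) (Fin n) ℝ} (hP : P.PosDef) :
    ∃ B : Matrix (Fin n) (Fin n) ℝ, P⁻¹ = Bᴴ * B := by
  obtain ⟨B, hB⟩ := CStarAlgebra.nonneg_iff_eq_star_mul_self.mp hP.inv.posSemidef.nonneg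
  exact ⟨B, hB⟩

/-- Strict **Gibbs' inequality** for centred Gaussians: the Kullback–Leibler divergence of `N(0, P)`
from `N(0, T)` is positive when `P ≠ T`. -/
lemma gibbs {n : ℕ} {P T : Matrix (Fin n) (Fin n) ℝ} (hP : P.PosDef) (hT : T.PosDef)
    (hne : P ≠ T) :
    n + Real.log T.det < (P⁻¹ * T).trace + Real.log P.det := by
  obtain ⟨B, hB⟩ := exists_factor_inv hP
  have hPu : IsUnit P.det := (Matrix.isUnit_iff_isUnit_det P).mp hP.isUnit
  have hBP : Bᴴ * B * P = 1 := by rw [← hB]; exact Matrix.nonsing_inv_mul P hPu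
  have hBu : IsUnit B := by
    have h := hP.inv.isUnit
    rw [hB, Matrix.isUnit_iff_isUnit_det, Matrix.det_mul] at h
    exact (Matrix.isUnit_iff_isUnit_det B).mpr (isUnit_of_mul_isUnit_right h)
  have hQ : (B * T * Bᴴ).PosDef :=
    hT.mul_mul_conjTranspose_same (Matrix.vecMul_injective_iff_isUnit.mpr hBu)
  have hQ1 : B * T * Bᴴ ≠ 1 := by
    intro h
    apply hne
    -- `T * Bᴴ` is a right inverse of `B`, hence also a left inverse.
    have h2 : T * Bᴴ * B = 1 := mul_eq_one_comm.mp (by rw [← Matrix.mul_assoc]; exact h)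
    calc P = T * Bᴴ * B * P := by rw [h2, Matrix.one_mul]
      _ = T * (Bᴴ * B * P) := by simp only [Matrix.mul_assoc]
      _ = T := by rw [hBP, Matrix.mul_one]
  have hlt := log_det_lt_trace hQ hQ1
  have htr : (B * T * Bᴴ).trace = (P⁻¹ * T).trace := by
    rw [hB, Matrix.trace_mul_comm, ← Matrix.mul_assoc]
  have hdet : (B * T * Bᴴ).det * P.det = T.det := by
    have h := congrArg Matrix.det hBP
    simp only [Matrix.det_mul, Matrix.det_one] at h ⊢
    linear_combination T.det * h
  have hlog : Real.log T.det = Real.log (B * T * Bᴴ).det + Real.log P.det := by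
    rw [← hdet, Real.log_mul hQ.det_pos.ne' hP.det_pos.ne']
  rw [htr] at hlt
  linarith

lemma trace_mul_add_vecMulVec {n : ℕ} (P S : Matrix (Fin n) (Fin n) ℝ) (v : Fin n → ℝ) :
    (P * (S + vecMulVec v v)).trace = (P * S).trace + v ⬝ᵥ (P *ᵥ v) := by
  rw [Matrix.mul_add, Matrix.trace_add, Matrix.mul_vecMulVec, Matrix.trace_vecMulVec,
    dotProduct_comm]

lemma det_add_vecMulVec_self {n : ℕ} {S : Matrix (Fin n) (Fin n) ℝ} (hS : S.PosDef)
    (v : Fin n → ℝ) :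
    (S + vecMulVec v v).det = S.det * (1 + v ⬝ᵥ (S⁻¹ *ᵥ v)) := by
  have hSu : IsUnit S.det := (Matrix.isUnit_iff_isUnit_det S).mp hS.isUnit
  rw [vecMulVec_eq Unit, det_add_replicateCol_mul_replicateRow hSu, Matrix.mul_assoc,
    ← replicateCol_mulVec, det_unique (1 + _ : Matrix Unit Unit ℝ), Matrix.add_apply,
    Matrix.one_apply_eq, Matrix.replicateRow_mul_replicateCol_apply]

lemma posDef_add_vecMulVec_self {n : ℕ} {S : Matrix (Fin n) (Fin n) ℝ} (hS : S.PosDef)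
    (v : Fin n → ℝ) : (S + vecMulVec v v).PosDef := by
  have h := Matrix.posSemidef_vecMulVec_self_star v
  rw [star_trivial] at h
  exact hS.add_posSemidef h

lemma mulVec_injective_of_rank_eq {m n : ℕ} {M : Matrix (Fin m) (Fin n) ℝ} (hM : M.rank = n) :
    Function.Injective M.mulVec := by
  rw [Matrix.mulVec_injective_iff, linearIndependent_iff_card_eq_finrank_span, Set.finrank,
    ← Matrix.rank_eq_finrank_span_cols, hM, Fintype.card_fin]

/-- On the hyperplane `Δ i = d`, the quadratic form of a positive definite `A` has the rescaled
`i`-th column of `A⁻¹` as its unique minimizer. -/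
lemma quad_lt {n : ℕ} {A : Matrix (Fin n) (Fin n) ℝ} (hA : A.PosDef) (i : Fin n) (d : ℝ)
    {x y : Fin n → ℝ} (hx : x = fun j => (A⁻¹ j i / A⁻¹ i i) * d) (hy : y i = d) (hne : y ≠ x) :
    x ⬝ᵥ (A *ᵥ x) < y ⬝ᵥ (A *ᵥ y) := by
  have hii : A⁻¹ i i ≠ 0 := hA.inv.diag_pos.ne'
  have hAu : IsUnit A.det := (Matrix.isUnit_iff_isUnit_det A).mp hA.isUnit
  have hxi : x i = d := by rw [hx]; simp [hii]
  have hx' : x = A⁻¹ *ᵥ Pi.single i (d / A⁻¹ i i) := by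
    funext j
    rw [hx, Matrix.mulVec_single]
    simp
    ring
  have hAx : A *ᵥ x = Pi.single i (d / A⁻¹ i i) := by
    rw [hx', Matrix.mulVec_mulVec, Matrix.mul_nonsing_inv A hAu, Matrix.one_mulVec]
  obtain ⟨h, rfl⟩ : ∃ h, y = x + h := ⟨y - x, by simp⟩
  have hhi : h i = 0 := by
    rw [Pi.add_apply, hxi] at hy
    linarith
  have h0 : h ≠ 0 := by rintro rfl; simp at hne
  have hpos : 0 < h ⬝ᵥ (A *ᵥ h) := by simpa using hA.dotProduct_mulVec_pos h0
  have hcross : h ⬝ᵥ (A *ᵥ x) = 0 := by rw [hAx, dotProduct_single, hhi, zero_mul]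
  have hcross' : x ⬝ᵥ (A *ᵥ h) = 0 := by
    have hAt : Aᵀ = A := by simpa using hA.1.eq
    rw [dotProduct_mulVec, ← mulVec_transpose, hAt, dotProduct_comm, hcross]
  rw [Matrix.mulVec_add, add_dotProduct, dotProduct_add, dotProduct_add, hcross, hcross']
  linarith

/-- Case (III) of Theorem 1: for a positive definite `Σ` (`D × D`), a `D × L`
matrix `M` of rank `L` with `D ≥ L`, a coordinate `i` and `d ∈ ℝ`, the function
`(Δ, Σ̂) ↦ tr(Σ̂⁻¹ Σ) + (MΔ)ᵀ Σ̂⁻¹ (MΔ) + log det Σ̂` over pairs with `Δ_i = d` and `Σ̂`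
positive definite has the unique global minimizer `(Δ*, Σ̂*)` with
`Δ*_j = ([(MᵀΣ⁻¹M)⁻¹]_{ji} / [(MᵀΣ⁻¹M)⁻¹]_{ii}) · d` and `Σ̂* = Σ + (MΔ*)(MΔ*)ᵀ`. -/
theorem stmt2 (D L : ℕ) (hDL : L ≤ D)
    (S : Matrix (Fin D) (Fin D) ℝ) (hS : S.PosDef)
    (M : Matrix (Fin D) (Fin L) ℝ) (hM : M.rank = L)
    (i : Fin L) (d : ℝ) :
    let f : (Fin L → ℝ) → Matrix (Fin D) (Fin D) ℝ → ℝ :=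
      fun Δ Shat => (Shat⁻¹ * S).trace + (M *ᵥ Δ) ⬝ᵥ (Shat⁻¹ *ᵥ (M *ᵥ Δ))
        + Real.log Shat.det
    let A : Matrix (Fin L) (Fin L) ℝ := Mᵀ * S⁻¹ * M
    let Δstar : Fin L → ℝ := fun j => (A⁻¹ j i / A⁻¹ i i) * d
    let Sstar : Matrix (Fin D) (Fin D) ℝ :=
      S + Matrix.vecMulVec (M *ᵥ Δstar) (M *ᵥ Δstar)
    Δstar i = d ∧ Sstar.PosDef ∧
    (∀ (Δ : Fin L → ℝ) (Shat : Matrix (Fin D) (Fin D) ℝ),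
      Δ i = d → Shat.PosDef → (Δ, Shat) ≠ (Δstar, Sstar) → f Δstar Sstar < f Δ Shat) := by
  intro f A Δstar Sstar
  have hA : A.PosDef := by
    simpa using hS.inv.conjTranspose_mul_mul_same (mulVec_injective_of_rank_eq hM)
  have hSstar : Sstar.PosDef := posDef_add_vecMulVec_self hS _
  refine ⟨by simp [Δstar, hA.inv.diag_pos.ne'], hSstar, ?_⟩
  intro Δ Shat hΔ hShat hne
  have hf : ∀ Δ' P, f Δ' P = (P⁻¹ * (S + vecMulVec (M *ᵥ Δ') (M *ᵥ Δ'))).trace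
      + Real.log P.det := fun Δ' P => by rw [trace_mul_add_vecMulVec]
  have hquad : ∀ Δ' : Fin L → ℝ, (S + vecMulVec (M *ᵥ Δ') (M *ᵥ Δ')).det
      = S.det * (1 + Δ' ⬝ᵥ (A *ᵥ Δ')) := fun Δ' => by
    rw [det_add_vecMulVec_self hS]
    congr 2
    simp only [A]
    rw [← Matrix.mulVec_mulVec, ← Matrix.mulVec_mulVec, dotProduct_mulVec Δ', vecMul_transpose]
  have hstar : f Δstar Sstar = D + Real.log Sstar.det := by
    rw [hf, Matrix.nonsing_inv_mul _ ((Matrix.isUnit_iff_isUnit_det _).mp hSstar.isUnit),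
      Matrix.trace_one, Fintype.card_fin]
  have hT := posDef_add_vecMulVec_self hS (M *ᵥ Δ)
  rw [hstar]
  by_cases hΔs : Δ = Δstar
  · subst hΔs
    rw [hf]
    exact gibbs hShat hSstar fun h => hne (by rw [h])
  · have hlt : Sstar.det < (S + vecMulVec (M *ᵥ Δ) (M *ᵥ Δ)).det := by
      rw [hquad, hquad]
      have := quad_lt hA i d rfl hΔ hΔs
      exact mul_lt_mul_of_pos_left (by linarith) hS.det_pos
    have hlog := Real.log_lt_log hSstar.det_pos hlt
    rw [hf]
    by_cases hP : Shat = S + vecMulVec (M *ᵥ Δ) (M *ᵥ Δ)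
    · rw [← hP] at hlog ⊢
      rw [Matrix.nonsing_inv_mul _ ((Matrix.isUnit_iff_isUnit_det _).mp hShat.isUnit),
        Matrix.trace_one, Fintype.card_fin]
      linarith
    · linarith [gibbs hShat hT hP]
end

section
/- Consider a partitional group structure: the I individuals are partitioned into K nonempty disjoint groups P_1,…,P_K, c_{jk} = 1 if and only if j ∈ P_k, c_{jk} ∈ {−1,0} otherwise, and c_j = c_{j'} whenever j and j' lie in the same group. Assume additionally that individuals in distinct groups share no common competitor group, i.e., if j ∈ P_k and j' ∈ P_{k'} with k ≠ k', there is no group m with c_{jm} = c_{j'm} = −1. Let agent i₁ ∈ P_{k₁} have overconfidence Δ > 0, and let k₂ ≠ k₁. Then: A^{i₁}_j > 0 for every j ∈ P_{k₁} with j ≠ i₁, and A^{i₁}_j ≤ 0 for every j ∈ P_{k₂}. Consequently, if the average true caliber of P_{k₁} equals that of P_{k₂}, i.e., (1/|P_{k₁}|)Σ_{j∈P_{k₁}} A_j = (1/|P_{k₂}|)Σ_{j∈P_{k₂}} A_j, then agent i₁'s believed average caliber of P_{k₁}, namely (1/|P_{k₁}|)(Σ_{j∈P_{k₁}, j≠i₁}(A_j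 + A^{i₁}_j) + (A_{i₁} + Δ)), strictly exceeds his believed average caliber of P_{k₂}, namely (1/|P_{k₂}|)Σ_{j∈P_{k₂}}(A_j + A^{i₁}_j). -/
/-!
The sign of the bias about `j` is the sign of `∑ k, c i1 k * c j k * vη k`, since the denominator
is positive. For `j` in the group of `i1` the rows `c i1` and `c j` agree, so this is a sum of
weighted squares with a positive term at `k1`. For `j ∈ P k2` every term is nonpositive: both
factors equal to `1` would put some individual in two groups, and both equal to `-1` would be
a shared competitor. For the averages, the believed total of `P k1` is the true total plus
nonnegative biases plus `Δ > 0`, while the believed total of `P k2` is at most the true one.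
-/

open BigOperators Finset

/-- Corollary 1, Part 1, in-group bias: under a partitional group structure
with no shared competitor groups across distinct groups, an overconfident agent `i₁ ∈ P k₁`
has strictly positive caliber bias about every other member of `P k₁` and nonpositive bias
about every member of `P k₂` (`k₂ ≠ k₁`); hence if the true average calibers of `P k₁` and
`P k₂` coincide, his believed average caliber of `P k₁` strictly exceeds that of `P k₂`. -/
theorem stmt6 (I K : ℕ) (P : Fin K → Finset (Fin I))
    (c : Fin I → Fin K → ℝ) (A : Fin I → ℝ)
    (vq : Fin I → ℝ) (vη : Fin K → ℝ) (Δ : ℝ)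
    (i1 : Fin I) (k1 k2 : Fin K)
    (hPne : ∀ k, (P k).Nonempty)
    (hPdisj : ∀ k k', k ≠ k' → Disjoint (P k) (P k'))
    (hPcover : ∀ j, ∃ k, j ∈ P k)
    (hc1 : ∀ j k, c j k = 1 ↔ j ∈ P k)
    (hcval : ∀ j k, c j k = -1 ∨ c j k = 0 ∨ c j k = 1)
    (hsame : ∀ k, ∀ j ∈ P k, ∀ j' ∈ P k, c j = c j')
    (hnocomp : ∀ k k', k ≠ k' → ∀ j ∈ P k, ∀ j' ∈ P k', ∀ m, ¬(c j m = -1 ∧ c j' m = -1))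
    (hvq : ∀ j, 0 < vq j) (hvη : ∀ k, 0 < vη k) (hΔ : 0 < Δ)
    (hi1 : i1 ∈ P k1) (hk12 : k1 ≠ k2) :
    let bias : Fin I → ℝ := fun j =>
      ((∑ k, c i1 k * c j k * vη k) / (vq i1 + ∑ k, (c i1 k) ^ 2 * vη k)) * Δ
    (∀ j ∈ P k1, j ≠ i1 → 0 < bias j) ∧
    (∀ j ∈ P k2, bias j ≤ 0) ∧
    ((∑ j ∈ P k1, A j) / (P k1).card = (∑ j ∈ P k2, A j) / (P k2).card →
      ((∑ j ∈ (P k1).erase i1, (A j + bias j)) + (A i1 + Δ)) / (P k1).card >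
        (∑ j ∈ P k2, (A j + bias j)) / (P k2).card) := by
  intro bias
  have h_den : 0 < vq i1 + ∑ k, (c i1 k) ^ 2 * vη k :=
    add_pos_of_pos_of_nonneg (hvq i1)
      (Finset.sum_nonneg fun k _ => mul_nonneg (sq_nonneg _) (hvη k).le)
  have h_in : ∀ j ∈ P k1, 0 < bias j := by
    intro j hj
    refine mul_pos (div_pos ?_ h_den) hΔ
    rw [hsame k1 j hj i1 hi1]
    refine Finset.sum_pos' (fun k _ => mul_nonneg (mul_self_nonneg _) (hvη k).le)
      ⟨k1, Finset.mem_univ _, ?_⟩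
    rw [(hc1 i1 k1).2 hi1]
    simpa using hvη k1
  have h_out : ∀ j ∈ P k2, bias j ≤ 0 := by
    intro j hj
    refine mul_nonpos_of_nonpos_of_nonneg
      (div_nonpos_of_nonpos_of_nonneg (Finset.sum_nonpos fun m _ => ?_) h_den.le) hΔ.le
    refine mul_nonpos_of_nonpos_of_nonneg ?_ (hvη m).le
    have h_neg := hnocomp k1 k2 hk12 i1 hi1 j hj m
    -- Membership of both in `P m` would force `k1 = m = k2` by disjointness.
    have h_pos : ¬(c i1 m = 1 ∧ c j m = 1) := by
      rintro ⟨h1, h2⟩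
      rw [hc1] at h1 h2
      have e1 : k1 = m := by
        by_contra h
        exact Finset.disjoint_left.1 (hPdisj k1 m h) hi1 h1
      have e2 : k2 = m := by
        by_contra h
        exact Finset.disjoint_left.1 (hPdisj k2 m h) hj h2
      exact hk12 (e1.trans e2.symm)
    rcases hcval i1 m with h1 | h1 | h1 <;> rcases hcval j m with h2 | h2 | h2 <;>
      simp [h1, h2] at h_neg h_pos ⊢
  refine ⟨fun j hj _ => h_in j hj, h_out, fun h_avg => ?_⟩
  have h_card1 : (0 : ℝ) < (P k1).card := by exact_mod_cast (hPne k1).card_pos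
  have h_upper : (∑ j ∈ P k2, (A j + bias j)) / (P k2).card ≤
      (∑ j ∈ P k2, A j) / (P k2).card := by
    refine div_le_div_of_nonneg_right (Finset.sum_le_sum fun j hj => ?_) (Nat.cast_nonneg _)
    linarith [h_out j hj]
  have h_lower : (∑ j ∈ P k1, A j) / (P k1).card <
      ((∑ j ∈ (P k1).erase i1, (A j + bias j)) + (A i1 + Δ)) / (P k1).card := by
    refine div_lt_div_of_pos_right ?_ h_card1
    rw [← Finset.sum_erase_add _ _ hi1, Finset.sum_add_distrib]
    have h_sum : 0 ≤ ∑ j ∈ (P k1).erase i1, bias j :=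
      Finset.sum_nonneg fun j hj => (h_in j (Finset.mem_of_mem_erase hj)).le
    linarith
  exact (h_upper.trans_eq h_avg.symm).trans_lt h_lower
end

section
/- Consider a partitional group structure as above and assume individuals in distinct groups share no common competitor group. Let agents i₁ ∈ P_{k₁} and i₂ ∈ P_{k₂} with k₁ ≠ k₂ have overconfidence levels Δ_{i₁} > 0 and Δ_{i₂} > 0 respectively. Then: (a) agent i₁'s believed average caliber of group P_{k₁} (computed as the average over j ∈ P_{k₁} of A_j + A^{i₁}_j, using A_{i₁} + Δ_{i₁} for himself) is strictly greater than agent i₂'s believed average caliber of P_{k₁}; and (b) agent i₁'s believed difference between the average caliber of P_{k₁} and the average caliber of P_{k₂} (using A_{i₂} + Δ_{i₂} for i₂ in i₂'s own computation) is strictly greater than agent i₂'s believed value of the same difference. -/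
open BigOperators Finset

/-!
Both agents are compared with the true averages `avg k` of `A` over `P k`. For an agent `i` in `P k`,
every member `j` of `P k` has `c j = c i`, so the covariance `∑ m, c i m * c j m * vη m` is a sum of
squares containing the term `vη k`; all biases inside `P k` are positive and `i`'s believed average
of `P k` exceeds `avg k` (`trueAvg_lt_believedAvg`). For `j` in another group, each product
`c i m * c j m` is nonpositive, since equal signs would mean a common group or a common competitor;
hence `i`'s believed average of that group is at most the true one (`believedAvg_le_trueAvg`).
Therefore `belAvg1 k1 > avg k1 ≥ belAvg2 k1` and `belAvg1 k2 ≤ avg k2 < belAvg2 k2`,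
which gives both claims.
-/

theorem trueAvg_lt_believedAvg {I K : ℕ} (S : Finset (Fin I)) (c : Fin I → Fin K → ℝ)
    (A : Fin I → ℝ) (v : ℝ) (vη : Fin K → ℝ) (Δ : ℝ) (i : Fin I) (k : Fin K)
    (hi : i ∈ S) (hik : c i k = 1) (hsame : ∀ j ∈ S, c j = c i)
    (hv : 0 < v) (hvη : ∀ k, 0 < vη k) (hΔ : 0 < Δ) :
    (∑ j ∈ S, A j) / (S.card : ℝ) <
      (∑ j ∈ S, (if j = i then A i + Δ else
        A j + ((∑ k, c i k * c j k * vη k) / (v + ∑ k, (c i k) ^ 2 * vη k)) * Δ)) / S.card := by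
  have hcard : (0 : ℝ) < S.card := by exact_mod_cast Finset.card_pos.mpr ⟨i, hi⟩
  have hpos : 0 < ∑ k, (c i k) ^ 2 * vη k :=
    Finset.sum_pos' (fun m _ => mul_nonneg (sq_nonneg _) (hvη m).le)
      ⟨k, Finset.mem_univ _, by simpa [hik] using hvη k⟩
  refine div_lt_div_of_pos_right (Finset.sum_lt_sum_of_nonempty ⟨i, hi⟩ fun j hj => ?_) hcard
  split_ifs with h
  · subst h; linarith
  · rw [hsame j hj]
    simp only [← pow_two]
    have : 0 < ((∑ k, (c i k) ^ 2 * vη k) / (v + ∑ k, (c i k) ^ 2 * vη k)) * Δ := by positivity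
    linarith

theorem believedAvg_le_trueAvg {I K : ℕ} (S : Finset (Fin I)) (c : Fin I → Fin K → ℝ)
    (A : Fin I → ℝ) (v : ℝ) (vη : Fin K → ℝ) (Δ : ℝ) (i : Fin I)
    (hi : i ∉ S) (hneg : ∀ j ∈ S, ∀ m, c i m * c j m ≤ 0)
    (hv : 0 < v) (hvη : ∀ k, 0 < vη k) (hΔ : 0 < Δ) :
    (∑ j ∈ S, (if j = i then A i + Δ else
        A j + ((∑ k, c i k * c j k * vη k) / (v + ∑ k, (c i k) ^ 2 * vη k)) * Δ)) / S.card ≤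
      (∑ j ∈ S, A j) / (S.card : ℝ) := by
  have hpos : 0 ≤ ∑ k, (c i k) ^ 2 * vη k :=
    Finset.sum_nonneg fun m _ => mul_nonneg (sq_nonneg _) (hvη m).le
  refine div_le_div_of_nonneg_right (Finset.sum_le_sum fun j hj => ?_) (Nat.cast_nonneg _)
  rw [if_neg (by rintro rfl; exact hi hj)]
  have h1 : ∑ k, c i k * c j k * vη k ≤ 0 :=
    Finset.sum_nonpos fun m _ => mul_nonpos_of_nonpos_of_nonneg (hneg j hj m) (hvη m).le
  have h2 := mul_nonpos_of_nonpos_of_nonneg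
    (div_nonpos_of_nonpos_of_nonneg h1 (add_nonneg hv.le hpos)) hΔ.le
  linarith

/-- Corollary 1, Part 2: under a partitional group structure with no shared
competitor groups across distinct groups, for overconfident agents `i₁ ∈ P k₁` and `i₂ ∈ P k₂`
(`k₁ ≠ k₂`): (a) `i₁`'s believed average caliber of `P k₁` strictly exceeds `i₂`'s, and
(b) `i₁`'s believed difference between the average calibers of `P k₁` and `P k₂` strictly
exceeds `i₂`'s believed value of the same difference. -/
theorem stmt7 (I K : ℕ) (P : Fin K → Finset (Fin I))
    (c : Fin I → Fin K → ℝ) (A : Fin I → ℝ)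
    (vq : Fin I → ℝ) (vη : Fin K → ℝ) (Δ1 Δ2 : ℝ)
    (i1 i2 : Fin I) (k1 k2 : Fin K)
    (hPne : ∀ k, (P k).Nonempty)
    (hPdisj : ∀ k k', k ≠ k' → Disjoint (P k) (P k'))
    (hPcover : ∀ j, ∃ k, j ∈ P k)
    (hc1 : ∀ j k, c j k = 1 ↔ j ∈ P k)
    (hcval : ∀ j k, c j k = -1 ∨ c j k = 0 ∨ c j k = 1)
    (hsame : ∀ k, ∀ j ∈ P k, ∀ j' ∈ P k, c j = c j')
    (hnocomp : ∀ k k', k ≠ k' → ∀ j ∈ P k, ∀ j' ∈ P k', ∀ m, ¬(c j m = -1 ∧ c j' m = -1))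
    (hvq : ∀ j, 0 < vq j) (hvη : ∀ k, 0 < vη k) (hΔ1 : 0 < Δ1) (hΔ2 : 0 < Δ2)
    (hi1 : i1 ∈ P k1) (hi2 : i2 ∈ P k2) (hk12 : k1 ≠ k2) :
    let bias1 : Fin I → ℝ := fun j =>
      ((∑ k, c i1 k * c j k * vη k) / (vq i1 + ∑ k, (c i1 k) ^ 2 * vη k)) * Δ1
    let bias2 : Fin I → ℝ := fun j =>
      ((∑ k, c i2 k * c j k * vη k) / (vq i2 + ∑ k, (c i2 k) ^ 2 * vη k)) * Δ2
    let belAvg1 : Fin K → ℝ := fun k =>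
      (∑ j ∈ P k, (if j = i1 then A i1 + Δ1 else A j + bias1 j)) / (P k).card
    let belAvg2 : Fin K → ℝ := fun k =>
      (∑ j ∈ P k, (if j = i2 then A i2 + Δ2 else A j + bias2 j)) / (P k).card
    belAvg1 k1 > belAvg2 k1 ∧
    belAvg1 k1 - belAvg1 k2 > belAvg2 k1 - belAvg2 k2 := by
  intro bias1 bias2 belAvg1 belAvg2
  have hneg : ∀ k k', k ≠ k' → ∀ i ∈ P k, ∀ j ∈ P k', ∀ m, c i m * c j m ≤ 0 := by
    intro k k' hk i hi j hj m
    -- Belonging to `P m` determines the group, so `i` and `j` cannot both have value `1` at `m`.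
    have hone : ¬ (c i m = 1 ∧ c j m = 1) := by
      rintro ⟨h1, h2⟩
      rw [hc1] at h1 h2
      have e1 : k = m := by
        by_contra h
        exact Finset.disjoint_left.mp (hPdisj k m h) hi h1
      have e2 : k' = m := by
        by_contra h
        exact Finset.disjoint_left.mp (hPdisj k' m h) hj h2
      exact hk (e1.trans e2.symm)
    have hcomp := hnocomp k k' hk i hi j hj m
    rcases hcval i m with h | h | h <;> rcases hcval j m with h' | h' | h' <;>
      first
      | (rw [h, h']; norm_num; done)
      | (exfalso; simp only [h, h', and_self, not_true_eq_false] at hone hcomp)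
  have own1 : _ < belAvg1 k1 := trueAvg_lt_believedAvg (P k1) c A (vq i1) vη Δ1 i1 k1 hi1
    ((hc1 _ _).2 hi1) (fun j hj => hsame k1 j hj i1 hi1) (hvq i1) hvη hΔ1
  have own2 : _ < belAvg2 k2 := trueAvg_lt_believedAvg (P k2) c A (vq i2) vη Δ2 i2 k2 hi2
    ((hc1 _ _).2 hi2) (fun j hj => hsame k2 j hj i2 hi2) (hvq i2) hvη hΔ2
  have other1 : belAvg1 k2 ≤ _ := believedAvg_le_trueAvg (P k2) c A (vq i1) vη Δ1 i1
    (Finset.disjoint_left.mp (hPdisj k1 k2 hk12) hi1)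
    (hneg k1 k2 hk12 i1 hi1) (hvq i1) hvη hΔ1
  have other2 : belAvg2 k1 ≤ _ := believedAvg_le_trueAvg (P k1) c A (vq i2) vη Δ2 i2
    (Finset.disjoint_left.mp (hPdisj k2 k1 hk12.symm) hi2)
    (hneg k2 k1 hk12.symm i2 hi2) (hvq i2) hvη hΔ2
  constructor <;> linarith
end

section
/- Fix an agent i with group-relationship values c_{ik} ∈ {−1,0,1} for k = 1,…,K, variances v^q_i > 0 and v^η_1,…,v^η_K > 0, and overconfidence Δ > 0. Suppose an irrelevant new group K+1 is added with c_{i,K+1} ∈ {−1,1} and v^η_{K+1} > 0. Then the total discrimination bias strictly increases: Σ_{k=1}^{K+1} |B'^i_k| > Σ_{k=1}^{K} |B^i_k|, where B^i_k = −c_{ik} v^η_k Δ / (v^q_i + Σ_{k'=1}^{K} c_{ik'}² v^η_{k'}) is computed with K groups and B'^i_k = −c_{ik} v^η_k Δ / (v^q_i + Σ_{k'=1}^{K+1} c_{ik'}² v^η_{k'}) with K+1 groups. -/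
open BigOperators

/-!
Since `|c| = c ^ 2` for `c ∈ {-1, 0, 1}`, a total of biases with common denominator `vq + T` equals
`S * Δ / (vq + T)`, where `S = ∑ k, c k ^ 2 * vη k` runs over the groups in that total. The claim
thus becomes `S * Δ / (vq + S) < (S + w) * Δ / (vq + (S + w))` for `S ≥ 0` and `w > 0`, the weight
of the new group, i.e. strict monotonicity of `s ↦ s / (vq + s)`.
-/

theorem abs_bias {c v Δ D : ℝ} (hc : c = -1 ∨ c = 0 ∨ c = 1) (hv : 0 < v) (hΔ : 0 < Δ)
    (hD : 0 < D) : |-c * v * Δ / D| = c ^ 2 * v * (Δ / D) := by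
  have habs : |c| = c ^ 2 := by
    rcases hc with rfl | rfl | rfl <;> norm_num
  rw [abs_div, abs_mul, abs_mul, abs_neg, abs_of_pos hv, abs_of_pos hΔ, abs_of_pos hD, habs,
    mul_div_assoc]

/-- Corollary 2: adding an irrelevant new group `K+1` (with
`c_{i,K+1} ∈ {−1,1}` and `v^η_{K+1} > 0`) to the agent's theory strictly increases his total
discrimination bias `Σ_k |B^i_k|`. -/
theorem stmt8 (K : ℕ) (c : Fin K → ℝ)
    (hc : ∀ k, c k = -1 ∨ c k = 0 ∨ c k = 1)
    (vη : Fin K → ℝ) (hvη : ∀ k, 0 < vη k)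
    (vq : ℝ) (hvq : 0 < vq) (Δ : ℝ) (hΔ : 0 < Δ)
    (cNew : ℝ) (hcNew : cNew = -1 ∨ cNew = 1)
    (vηNew : ℝ) (hvηNew : 0 < vηNew) :
    let B : Fin K → ℝ := fun k =>
      -(c k) * vη k * Δ / (vq + ∑ k', (c k') ^ 2 * vη k')
    let B' : Fin K → ℝ := fun k =>
      -(c k) * vη k * Δ / (vq + ((∑ k', (c k') ^ 2 * vη k') + cNew ^ 2 * vηNew))
    let B'New : ℝ :=
      -cNew * vηNew * Δ / (vq + ((∑ k', (c k') ^ 2 * vη k') + cNew ^ 2 * vηNew))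
    (∑ k, |B' k|) + |B'New| > ∑ k, |B k| := by
  intro B B' B'New
  have hS : 0 ≤ ∑ k, c k ^ 2 * vη k :=
    Finset.sum_nonneg fun k _ => mul_nonneg (sq_nonneg _) (hvη k).le
  have hw : 0 < cNew ^ 2 * vηNew := by
    rcases hcNew with rfl | rfl <;> simpa using hvηNew
  have hcNew' : cNew = -1 ∨ cNew = 0 ∨ cNew = 1 := hcNew.imp_right Or.inr
  have hD : 0 < vq + ∑ k, c k ^ 2 * vη k := by linarith
  have hD' : 0 < vq + ((∑ k, c k ^ 2 * vη k) + cNew ^ 2 * vηNew) := by linarith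
  have hB : ∑ k, |B k| = (∑ k, c k ^ 2 * vη k) * (Δ / (vq + ∑ k, c k ^ 2 * vη k)) := by
    rw [Finset.sum_mul]
    exact Finset.sum_congr rfl fun k _ => abs_bias (hc k) (hvη k) hΔ hD
  have hB' : ∑ k, |B' k| = (∑ k, c k ^ 2 * vη k) *
      (Δ / (vq + ((∑ k, c k ^ 2 * vη k) + cNew ^ 2 * vηNew))) := by
    rw [Finset.sum_mul]
    exact Finset.sum_congr rfl fun k _ => abs_bias (hc k) (hvη k) hΔ hD'
  have hNew : |B'New| = cNew ^ 2 * vηNew *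
      (Δ / (vq + ((∑ k, c k ^ 2 * vη k) + cNew ^ 2 * vηNew))) :=
    abs_bias hcNew' hvηNew hΔ hD'
  rw [hB, hB', hNew, ← add_mul, gt_iff_lt, ← mul_div_assoc, ← mul_div_assoc,
    div_lt_div_iff₀ hD hD']
  -- The cross-multiplied sides differ by exactly `Δ * vq * w`.
  linarith [mul_pos (mul_pos hΔ hvq) hw]
end

section
/- Fix I individuals with group-relationship values c_{jk} ∈ {−1,0,1} over K groups, variances v^q_i > 0, v^η_1,…,v^η_K > 0, an agent i with overconfidence Δ > 0 and c_{iκ} = 1 for some group κ ≤ K. Suppose a new group K+1 with v^η_{K+1} > 0 is added, with c_{j,K+1} = −1 for every individual j with c_{jκ} = 1 (in particular c_{i,K+1} = −1). Then: (a) for every j ≠ i with c_{jκ} = 1, the caliber bias of agent i about j computed with K+1 groups, A'^i_j = ((Σ_{k=1}^{K+1} c_{ik}c_{jk}v^η_k)/(v^q_i + Σ_{k=1}^{K+1} c_{ik}²v^η_k))·Δ, is strictly greater than the bias A^i_j computed with the original K groups; and (b) for every member j of group K+1 (i.e., c_{j,K+1} = 1), A'^i_j is strictly less than A^i_j. -/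
open BigOperators

/-!
Write a bias as `S / D * Δ`, where `S = ∑ k, c i k * c j k * vη k` and
`D = vq i + ∑ k, (c i k) ^ 2 * vη k`. Since the values of `c` lie in `{-1, 0, 1}`, each summand
of `S` is at most the corresponding summand of `D` in absolute value, so `|S| < D` by `vq i > 0`
(`abs_sum_lt_denom`). As `cNew i = -1`, the new group replaces `S / D` by `(S ± v) / (D + v)`
with `v > 0`: the mediant of `S / D` with `±1`. The sign is `+` for members of group `κ` and `-`
for members of the new group, and `-1 < S / D < 1` makes the move towards `±1` strict.
-/

lemma abs_sum_lt_denom {K : ℕ} (a b v : Fin K → ℝ)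
    (ha : ∀ k, a k = -1 ∨ a k = 0 ∨ a k = 1) (hb : ∀ k, b k = -1 ∨ b k = 0 ∨ b k = 1)
    (hv : ∀ k, 0 < v k) {q : ℝ} (hq : 0 < q) :
    |∑ k, a k * b k * v k| < q + ∑ k, (a k) ^ 2 * v k := by
  have h : |∑ k, a k * b k * v k| ≤ ∑ k, (a k) ^ 2 * v k := by
    refine (Finset.abs_sum_le_sum_abs _ _).trans (Finset.sum_le_sum fun k _ => ?_)
    have hk := hv k
    rcases ha k with h | h | h <;> rcases hb k with h' | h' | h' <;>
      simp [h, h', abs_of_pos hk, hk.le]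
  linarith

/-- Corollary 3: adding an irrelevant group `K+1` whose competitors include
all members of the agent's group `κ` improves the agent's view of every other member of group
`κ` and worsens his view of every member of group `K+1`. -/
theorem stmt9 (I K : ℕ) (c : Fin I → Fin K → ℝ)
    (hc : ∀ j k, c j k = -1 ∨ c j k = 0 ∨ c j k = 1)
    (vq : Fin I → ℝ) (hvq : ∀ j, 0 < vq j)
    (vη : Fin K → ℝ) (hvη : ∀ k, 0 < vη k)
    (Δ : ℝ) (hΔ : 0 < Δ)
    (i : Fin I) (κ : Fin K) (hiκ : c i κ = 1)
    (cNew : Fin I → ℝ) (hcNewVal : ∀ j, cNew j = -1 ∨ cNew j = 0 ∨ cNew j = 1)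
    (hcNew : ∀ j, c j κ = 1 → cNew j = -1)
    (vηNew : ℝ) (hvηNew : 0 < vηNew) :
    let bias : Fin I → ℝ := fun j =>
      ((∑ k, c i k * c j k * vη k) / (vq i + ∑ k, (c i k) ^ 2 * vη k)) * Δ
    let bias' : Fin I → ℝ := fun j =>
      (((∑ k, c i k * c j k * vη k) + cNew i * cNew j * vηNew) /
        (vq i + ((∑ k, (c i k) ^ 2 * vη k) + (cNew i) ^ 2 * vηNew))) * Δ
    (∀ j, j ≠ i → c j κ = 1 → bias j < bias' j) ∧
    (∀ j, cNew j = 1 → bias' j < bias j) := by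
  intro bias bias'
  have hi : cNew i = -1 := hcNew i hiκ
  have key := fun j => abs_lt.mp (abs_sum_lt_denom (c i) (c j) vη (hc i) (hc j) hvη (hvq i))
  refine ⟨fun j _ hj => ?_, fun j hj => ?_⟩
  · obtain ⟨h1, h2⟩ := key j
    simp only [bias, bias', hi, hcNew j hj]
    refine mul_lt_mul_of_pos_right ?_ hΔ
    rw [div_lt_div_iff₀ (by linarith) (by linarith)]
    nlinarith [mul_lt_mul_of_pos_right h2 hvηNew]
  · obtain ⟨h1, h2⟩ := key j
    simp only [bias, bias', hi, hj]
    refine mul_lt_mul_of_pos_right ?_ hΔ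
    rw [div_lt_div_iff₀ (by linarith) (by linarith)]
    nlinarith [mul_lt_mul_of_pos_right h1 hvηNew]
end

section
/- Fix an agent i with group-relationship values c_{ik} ∈ {−1,0,1} over K groups, overconfidence Δ > 0, variance v^q_i > 0, and a group k with c_{ik} ≠ 0. Viewing the discrimination biases B^i_{k'} = −c_{ik'} v^η_{k'} Δ / (v^q_i + Σ_m c_{im}² v^η_m) as functions of v^η_k > 0 (all other variances v^η_m > 0 held fixed), the following hold: (a) |B^i_k| is strictly increasing in v^η_k; (b) the total bias Σ_{k'} |B^i_{k'}| is strictly increasing in v^η_k; and (c) for every group k' ≠ k with c_{ik'} ≠ 0, |B^i_{k'}| is strictly decreasing in v^η_k. -/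
/-!
Since `c m ∈ {-1, 0, 1}`, we have `c m ^ 2 = |c m|`. Writing `S ≥ 0` for the sum of `|c m| * vη m`
over `m ≠ k`, the common denominator is `vq + S + t`, the bias about group `k` is `t * Δ` over it,
the total bias is `(S + t) * Δ` over it, and the bias about another group `k'` with `c k' ≠ 0` is
`vη k' * Δ` over it. The first two are increasing in `t` because `x ↦ x / (a + x)` is increasing
for `a > 0` (take `x = t`, `a = vq + S`, respectively `x = S + t`, `a = vq`), and the third is
decreasing because only its denominator depends on `t`.
-/

open BigOperators

/-- Corollary 4: viewing the discrimination biases as functions of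
`v^η_k > 0` (the other variances fixed), for a group `k` with `c_{ik} ≠ 0`:
(a) `|B^i_k|` is strictly increasing in `v^η_k`; (b) the total bias `Σ_{k'} |B^i_{k'}|` is
strictly increasing in `v^η_k`; (c) for every other group `k' ≠ k` with `c_{ik'} ≠ 0`,
`|B^i_{k'}|` is strictly decreasing in `v^η_k`. -/
theorem stmt10 (K : ℕ) (c : Fin K → ℝ)
    (hc : ∀ k, c k = -1 ∨ c k = 0 ∨ c k = 1)
    (vq : ℝ) (hvq : 0 < vq) (Δ : ℝ) (hΔ : 0 < Δ)
    (k : Fin K) (hck : c k ≠ 0)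
    (vη : Fin K → ℝ) (hvη : ∀ m, 0 < vη m) :
    let B : ℝ → Fin K → ℝ := fun t k' =>
      -(c k') * Function.update vη k t k' * Δ /
        (vq + ∑ m, (c m) ^ 2 * Function.update vη k t m)
    ∀ t₁ t₂ : ℝ, 0 < t₁ → t₁ < t₂ →
      (|B t₁ k| < |B t₂ k|) ∧
      ((∑ k', |B t₁ k'|) < ∑ k', |B t₂ k'|) ∧
      (∀ k' : Fin K, k' ≠ k → c k' ≠ 0 → |B t₂ k'| < |B t₁ k'|) := by
  intro B t₁ t₂ ht₁ h12
  have habs : ∀ m, |c m| = c m ^ 2 := by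
    intro m
    rcases hc m with h | h | h <;> simp [h]
  have hsq : ∀ m, c m ≠ 0 → c m ^ 2 = 1 := by
    intro m hm
    rcases hc m with h | h | h
    · simp [h]
    · exact absurd h hm
    · simp [h]
  set S : ℝ := ∑ m ∈ Finset.univ.erase k, c m ^ 2 * vη m with hS
  have hS0 : 0 ≤ S := Finset.sum_nonneg fun m _ => mul_nonneg (sq_nonneg _) (hvη m).le
  have hsum : ∀ t, ∑ m, c m ^ 2 * Function.update vη k t m = S + t := by
    intro t
    rw [← Finset.sum_erase_add _ _ (Finset.mem_univ k), Function.update_self, hsq k hck, one_mul,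
      hS]
    congr 1
    refine Finset.sum_congr rfl fun m hm => ?_
    rw [Function.update_of_ne (Finset.ne_of_mem_erase hm)]
  have hB : ∀ t, 0 < t → ∀ m,
      |B t m| = c m ^ 2 * Function.update vη k t m * Δ / (vq + (S + t)) := by
    intro t ht m
    have hu : 0 < Function.update vη k t m := by
      rcases eq_or_ne m k with rfl | h
      · simpa using ht
      · simpa [h] using hvη m
    have hD : 0 < vq + (S + t) := by linarith
    simp only [B]
    rw [hsum, abs_div, abs_mul, abs_mul, abs_neg, habs, abs_of_pos hu, abs_of_pos hΔ,
      abs_of_pos hD]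
  have htot : ∀ t, 0 < t → ∑ m, |B t m| = (S + t) * Δ / (vq + (S + t)) := by
    intro t ht
    rw [Finset.sum_congr rfl fun m _ => hB t ht m, ← Finset.sum_div, ← Finset.sum_mul, hsum]
  have ht₂ : 0 < t₂ := ht₁.trans h12
  have hD₁ : 0 < vq + (S + t₁) := by linarith
  have hD₂ : 0 < vq + (S + t₂) := by linarith
  refine ⟨?_, ?_, fun k' hk' hck' => ?_⟩
  · rw [hB t₁ ht₁, hB t₂ ht₂, Function.update_self, Function.update_self, hsq k hck,
      div_lt_div_iff₀ hD₁ hD₂]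
    -- The cross-multiplied difference is `(t₂ - t₁) * Δ * (vq + S)`.
    have : 0 < (t₂ - t₁) * Δ * (vq + S) :=
      mul_pos (mul_pos (sub_pos.2 h12) hΔ) (by linarith)
    linarith
  · rw [htot t₁ ht₁, htot t₂ ht₂, div_lt_div_iff₀ hD₁ hD₂]
    -- Here it is `(t₂ - t₁) * Δ * vq`.
    have : 0 < (t₂ - t₁) * Δ * vq := mul_pos (mul_pos (sub_pos.2 h12) hΔ) hvq
    linarith
  · rw [hB t₁ ht₁, hB t₂ ht₂, Function.update_of_ne hk', Function.update_of_ne hk', hsq k' hck',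
      one_mul]
    exact div_lt_div_of_pos_left (mul_pos (hvη k') hΔ) hD₁ (by linarith)
end

section
/- Fix I individuals with group-relationship values c_{jk} ∈ {−1,0,1} over K groups, variances v^q_i > 0 and v^η_1,…,v^η_K > 0, and an agent i ≤ I with overconfidence Δ > 0. Add a new competitor group K+1 with new individuals j = I+1,…,I' such that c_{j,K+1} = 1 for j > I, c_{j,K+1} = −1 for j ≤ I, and c_{jk} = 0 for all j > I and k ≤ K, with variance v^η_{K+1} > 0. Then: (a) for every new individual j > I, agent i's caliber bias A^i_j = ((Σ_{k=1}^{K+1} c_{ik}c_{jk}v^η_k)/(v^q_i + Σ_{k=1}^{K+1} c_{ik}²v^η_k))·Δ is strictly negative; and (b) there exists V > 0 such that whenever v^η_{K+1} > V, the bias A^i_j is strictly positive for every original individual j ≤ I with j ≠ i. -/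
/-! The denominator of the bias is always positive, so its sign is that of the numerator. For a
new individual the numerator is minus the variance of the new group. For an original individual
it is that variance plus an overlap term bounded below by minus the total variance of the original
groups (`neg_sum_le_overlap`), uniformly in the individual, so any threshold above that total
works. -/

open BigOperators

/-- Products of membership values are at least `-1`, so group overlap can never pull the
numerator of the bias below minus the total variance of the groups. -/
lemma neg_sum_le_overlap {K : ℕ} (a b v : Fin K → ℝ)
    (ha : ∀ k, a k = -1 ∨ a k = 0 ∨ a k = 1) (hb : ∀ k, b k = -1 ∨ b k = 0 ∨ b k = 1)
    (hv : ∀ k, 0 < v k) : -∑ k, v k ≤ ∑ k, a k * b k * v k := by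
  rw [← Finset.sum_neg_distrib]
  refine Finset.sum_le_sum fun k _ => ?_
  have h := hv k
  rcases ha k with h1 | h1 | h1 <;> rcases hb k with h2 | h2 | h2 <;>
    rw [h1, h2] <;> linarith

/-- Corollary 5: when a new competitor group `K+1` of new individuals is
added (new individuals are members of group `K+1`, all original individuals its competitors,
and new individuals are neutral toward all original groups), (a) agent `i`'s caliber bias
about every new individual is strictly negative, and (b) there is a threshold `V > 0` such
that whenever `v^η_{K+1} > V`, his caliber bias about every original individual `j ≠ i` is
strictly positive. -/
theorem stmt11 (I K : ℕ) (c : Fin I → Fin K → ℝ)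
    (hc : ∀ j k, c j k = -1 ∨ c j k = 0 ∨ c j k = 1)
    (vq : Fin I → ℝ) (hvq : ∀ j, 0 < vq j)
    (vη : Fin K → ℝ) (hvη : ∀ k, 0 < vη k)
    (Δ : ℝ) (hΔ : 0 < Δ) (i : Fin I)
    (vηNew : ℝ) (hvηNew : 0 < vηNew) :
    -- bias about a new individual `j > I`: `c_{jk} = 0` for `k ≤ K`, `c_{j,K+1} = 1`,
    -- and `c_{i,K+1} = -1`
    let biasNew : ℝ → ℝ := fun w =>
      (((∑ k, c i k * 0 * vη k) + (-1 : ℝ) * 1 * w) /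
        (vq i + ((∑ k, (c i k) ^ 2 * vη k) + ((-1 : ℝ)) ^ 2 * w))) * Δ
    -- bias about an original individual `j ≤ I`: `c_{i,K+1} = c_{j,K+1} = -1`
    let biasOld : ℝ → Fin I → ℝ := fun w j =>
      (((∑ k, c i k * c j k * vη k) + (-1 : ℝ) * (-1 : ℝ) * w) /
        (vq i + ((∑ k, (c i k) ^ 2 * vη k) + ((-1 : ℝ)) ^ 2 * w))) * Δ
    biasNew vηNew < 0 ∧
    ∃ V : ℝ, 0 < V ∧ ∀ w : ℝ, V < w → ∀ j : Fin I, j ≠ i → 0 < biasOld w j := by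
  intro biasNew biasOld
  have hD : ∀ w : ℝ, 0 < w →
      0 < vq i + ((∑ k, (c i k) ^ 2 * vη k) + ((-1 : ℝ)) ^ 2 * w) := by
    intro w hw
    have h1 : 0 ≤ ∑ k, (c i k) ^ 2 * vη k :=
      Finset.sum_nonneg fun k _ => mul_nonneg (sq_nonneg _) (hvη k).le
    have h2 := hvq i
    linarith
  have hS : 0 ≤ ∑ k, vη k := Finset.sum_nonneg fun k _ => (hvη k).le
  refine ⟨?_, 1 + ∑ k, vη k, by linarith, fun w hw j _ => ?_⟩
  · refine mul_neg_of_neg_of_pos (div_neg_of_neg_of_pos ?_ (hD _ hvηNew)) hΔ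
    simpa using hvηNew
  · refine mul_pos (div_pos ?_ (hD w (by linarith))) hΔ
    have h := neg_sum_le_overlap (c i) (c j) vη (hc i) (hc j) hvη
    linarith
end

section
/- Let I ≥ 2, let C ∈ {−1,1}^I be the vector of group relationships (one group, each individual a member or competitor), and let v^q, v^η, v^a > 0. Let M be the (2I+1)×(I+1) real matrix with block rows [Id_I, C], [0, 1], [Id_I, 0], and let Σ = diag(v^q,…,v^q, v^η, v^a,…,v^a) be the (2I+1)×(2I+1) diagonal matrix with first I entries v^q, then one entry v^η, then I entries v^a. Set B = MᵀΣ⁻¹M, an (I+1)×(I+1) positive definite matrix. Then for all individuals i, j ≤ I with i ≠ j: (B⁻¹)_{ji} / (B⁻¹)_{ii} = v^η v^a c_i c_j / ((v^q + v^η)(v^q + v^a) + (I−1) v^q v^η), and (B⁻¹)_{(I+1), i} / (B⁻¹)_{ii} = −v^η (v^q + v^a) c_i / ((v^q + v^η)(v^q + v^a) + (I−1) v^q v^η), where c_j denotes the j-th entry of C. -/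
/-!
`S⁻¹` is positive definite and `M` is injective (its last two block rows form a permutation
of the identity), so `B = Mᵀ S⁻¹ M` is positive definite, hence invertible, and its `i`-th inverse column
is the unique solution of `B x = e_i`. With `D = (vq + vη)(vq + va) + (I − 1) vq vη` that solution
is `κ` times the vector with entries `D` at `i`, `vη va c_i c_j` at individuals `j ≠ i` and
`−vη (vq + va) c_i` in the last coordinate, where `κ = va / ((vq + va)(vq + va + I vη)) > 0`.
The scale `κ` cancels in the ratios.
-/

open Matrix BigOperators

/-- Proposition 3, The Effect of Personal Contact: with one group,
relationship vector `C ∈ {−1,1}^I`, observation matrix `M` with block rows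
`[Id, C], [0, 1], [Id, 0]` and noise covariance `Σ = diag(v^q,…,v^q, v^η, v^a,…,v^a)`, the
matrix `B = MᵀΣ⁻¹M` is positive definite and for individuals `i ≠ j`:
`(B⁻¹)_{ji}/(B⁻¹)_{ii} = v^η v^a c_i c_j / ((v^q+v^η)(v^q+v^a) + (I−1)v^q v^η)` and
`(B⁻¹)_{I+1,i}/(B⁻¹)_{ii} = −v^η(v^q+v^a) c_i / ((v^q+v^η)(v^q+v^a) + (I−1)v^q v^η)`. -/
theorem stmt16 (I : ℕ) (hI : 2 ≤ I) (C : Fin I → ℝ)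
    (hC : ∀ j, C j = -1 ∨ C j = 1)
    (vq vη va : ℝ) (hvq : 0 < vq) (hvη : 0 < vη) (hva : 0 < va) :
    let M : Matrix (Fin I ⊕ (Unit ⊕ Fin I)) (Fin I ⊕ Unit) ℝ :=
      Matrix.of fun r c' =>
        match r, c' with
        | Sum.inl j, Sum.inl j' => if j = j' then 1 else 0
        | Sum.inl j, Sum.inr _ => C j
        | Sum.inr (Sum.inl _), Sum.inl _ => 0
        | Sum.inr (Sum.inl _), Sum.inr _ => 1
        | Sum.inr (Sum.inr j), Sum.inl j' => if j = j' then 1 else 0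
        | Sum.inr (Sum.inr _), Sum.inr _ => 0
    let S : Matrix (Fin I ⊕ (Unit ⊕ Fin I)) (Fin I ⊕ (Unit ⊕ Fin I)) ℝ :=
      Matrix.diagonal (Sum.elim (fun _ => vq) (Sum.elim (fun _ => vη) fun _ => va))
    let B : Matrix (Fin I ⊕ Unit) (Fin I ⊕ Unit) ℝ := Mᵀ * S⁻¹ * M
    B.PosDef ∧
    ∀ i j : Fin I, i ≠ j →
      B⁻¹ (Sum.inl j) (Sum.inl i) / B⁻¹ (Sum.inl i) (Sum.inl i) =
        vη * va * C i * C j / ((vq + vη) * (vq + va) + ((I : ℝ) - 1) * vq * vη) ∧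
      B⁻¹ (Sum.inr ()) (Sum.inl i) / B⁻¹ (Sum.inl i) (Sum.inl i) =
        -vη * (vq + va) * C i / ((vq + vη) * (vq + va) + ((I : ℝ) - 1) * vq * vη) := by
  intro M S B
  have hIpos : (0 : ℝ) < I := by
    have : 0 < I := by omega
    exact_mod_cast this
  have hC2 : ∀ j, C j * C j = 1 := fun j => by
    rcases hC j with h | h <;> rw [h] <;> norm_num
  have hSinv : S⁻¹ = Matrix.diagonal
      (Sum.elim (fun _ => vq⁻¹) (Sum.elim (fun _ => vη⁻¹) fun _ => va⁻¹)) := by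
    apply Matrix.inv_eq_right_inv
    simp only [S, Matrix.diagonal_mul_diagonal]
    rw [← Matrix.diagonal_one]
    congr 1
    funext r
    rcases r with _ | _ | _ <;> simp [hvq.ne', hvη.ne', hva.ne']
  have hMq : ∀ x j, (M *ᵥ x) (Sum.inl j) = x (Sum.inl j) + C j * x (Sum.inr ()) := by
    intro x j
    simp [Matrix.mulVec, dotProduct, M]
  have hMη : ∀ x u, (M *ᵥ x) (Sum.inr (Sum.inl u)) = x (Sum.inr ()) := by
    intro x u
    simp [Matrix.mulVec, dotProduct, M]
  have hMa : ∀ x j, (M *ᵥ x) (Sum.inr (Sum.inr j)) = x (Sum.inl j) := by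
    intro x j
    simp [Matrix.mulVec, dotProduct, M]
  have hMinj : Function.Injective M.mulVec := by
    intro x y h
    funext c
    rcases c with j | u
    · have := congrFun h (Sum.inr (Sum.inr j))
      rwa [hMa, hMa] at this
    · have := congrFun h (Sum.inr (Sum.inl u))
      rwa [hMη, hMη] at this
  have hB : B.PosDef := by
    have hS : (S⁻¹).PosDef := by
      rw [hSinv]
      apply Matrix.PosDef.diagonal
      intro r
      rcases r with _ | _ | _ <;> simp [hvq, hvη, hva]
    have := hS.conjTranspose_mul_mul_same hMinj
    rwa [Matrix.conjTranspose_eq_transpose_of_trivial] at this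
  refine ⟨hB, fun i j hij => ?_⟩
  set D : ℝ := (vq + vη) * (vq + va) + ((I : ℝ) - 1) * vq * vη with hD
  have hDpos : 0 < D := by
    have : D = vq * vq + vq * va + vη * va + I * vq * vη := by rw [hD]; ring
    rw [this]; positivity
  set κ : ℝ := va / ((vq + va) * (vq + va + I * vη)) with hκ
  have hκpos : 0 < κ := by positivity
  -- `x` is the `i`-th column of `B⁻¹`; its `i`-th entry is written as
  -- `κ (vη va C i² + (D − vη va)) = κ D`.
  let x : Fin I ⊕ Unit → ℝ := Sum.elim
    (fun k => κ * (vη * va * C i * C k + if k = i then D - vη * va else 0))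
    (fun _ => κ * (-vη * (vq + va) * C i))
  have hBx : B *ᵥ x = Pi.single (Sum.inl i) 1 := by
    have hB' : B *ᵥ x = Mᵀ *ᵥ (S⁻¹ *ᵥ (M *ᵥ x)) := by
      simp only [B, Matrix.mulVec_mulVec, Matrix.mul_assoc]
    rw [hB', hSinv]
    funext c
    rcases c with k | u
    · have h1 : ∀ w, (Mᵀ *ᵥ w) (Sum.inl k) = w (Sum.inl k) + w (Sum.inr (Sum.inr k)) := by
        intro w
        simp [Matrix.mulVec, dotProduct, M]
      rw [h1, Matrix.mulVec_diagonal, Matrix.mulVec_diagonal, hMq, hMa]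
      by_cases hk : k = i
      · subst hk
        simp only [Sum.elim_inl, Sum.elim_inr, x, if_true, Pi.single_eq_same]
        have e : vη * va * C k * C k = vη * va := by rw [mul_assoc, hC2, mul_one]
        have e2 : C k * (κ * (-vη * (vq + va) * C k)) = -κ * vη * (vq + va) := by
          linear_combination (-κ * vη * (vq + va)) * hC2 k
        rw [e, e2, hκ, hD]
        field_simp
        ring
      · have hk' : (Sum.inl k : Fin I ⊕ Unit) ≠ Sum.inl i := by simpa using hk
        simp only [Sum.elim_inl, Sum.elim_inr, x, if_neg hk, Pi.single_eq_of_ne hk']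
        field_simp
        ring
    -- In the last row each `C k` enters squared, so all summands with `k ≠ i` coincide.
    · have h1 : ∀ w, (Mᵀ *ᵥ w) (Sum.inr u) =
          (∑ k, C k * w (Sum.inl k)) + w (Sum.inr (Sum.inl ())) := by
        intro w
        simp [Matrix.mulVec, dotProduct, M]
      have h2 : ∀ k, C k * (vq⁻¹ * (x (Sum.inl k) + C k * x (Sum.inr ()))) =
          -κ * vη * C i + if k = i then vq⁻¹ * κ * (D - vη * va) * C i else 0 := by
        intro k
        by_cases hk : k = i
        · subst hk
          simp only [x, Sum.elim_inl, Sum.elim_inr, if_true]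
          field_simp
          linear_combination (-vη * vq * C k) * hC2 k
        · simp only [x, Sum.elim_inl, Sum.elim_inr, if_neg hk]
          linear_combination (-κ * vη * C i * (vq⁻¹ * vq)) * hC2 k -
            κ * vη * C i * inv_mul_cancel₀ hvq.ne'
      rw [h1, Matrix.mulVec_diagonal, hMη]
      simp only [Matrix.mulVec_diagonal, hMq, Sum.elim_inl, Sum.elim_inr, h2]
      rw [Finset.sum_add_distrib, Finset.sum_ite_eq' Finset.univ i]
      simp only [Finset.sum_const, Finset.card_univ, Fintype.card_fin, nsmul_eq_mul,
        Finset.mem_univ, if_true, x, Sum.elim_inr]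
      rw [Pi.single_eq_of_ne (by simp), hD]
      field_simp
      ring
  have hcol : ∀ c, B⁻¹ c (Sum.inl i) = x c := by
    intro c
    have hdet : IsUnit B.det := (Matrix.isUnit_iff_isUnit_det B).1 hB.isUnit
    have h : B⁻¹ *ᵥ (B *ᵥ x) = x := by
      rw [Matrix.mulVec_mulVec, Matrix.nonsing_inv_mul _ hdet, Matrix.one_mulVec]
    rw [hBx, Matrix.mulVec_single_one] at h
    exact congrFun h c
  have hxi : x (Sum.inl i) = κ * D := by
    simp only [x, Sum.elim_inl, if_true]
    linear_combination (κ * vη * va) * hC2 i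
  rw [hcol, hcol, hcol, hxi]
  constructor
  · simp only [x, Sum.elim_inl, if_neg hij.symm, add_zero]
    exact mul_div_mul_left _ _ hκpos.ne'
  · exact mul_div_mul_left _ _ hκpos.ne'
end

section
/- Let v^q_o, v^a_o > 0. Let M be the 9×5 real matrix with rows (1,0,0,0,1), (0,1,0,0,1), (0,0,1,0,−1), (0,0,0,1,−1), (0,0,0,0,1), (1,0,0,0,0), (0,1,0,0,0), (0,0,1,0,0), (0,0,0,1,0), and let Σ = diag(1, 1, v^q_o, v^q_o, 1, 1, 1, v^a_o, v^a_o). Set B = MᵀΣ⁻¹M, a 5×5 positive definite matrix. Then (B⁻¹)_{31}/(B⁻¹)_{11} = (B⁻¹)_{41}/(B⁻¹)_{11} = −2 v^a_o / (5 v^q_o + 5 v^a_o + 4), and (B⁻¹)_{51}/(B⁻¹)_{11} = −2 (v^q_o + v^a_o) / (5 v^q_o + 5 v^a_o + 4). -/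
/-!
The first column of `B⁻¹` is the solution `x` of `B *ᵥ x = e₀`. Up to the factor `8 * (s + 1)`
with `s = vqo + vao`, that solution is the explicit vector
`v = (5s + 4, s, -2 vao, -2 vao, -2s)`: applying `M`, `S⁻¹` and `Mᵀ` to it in that
order gives `M *ᵥ v`, then a vector `u` free of denominators, then `8 (s + 1) e₀`. The common factor
cancels in the ratios. The matrix `B` is positive definite, hence invertible, because `S` is
positive definite and `M` has trivial kernel.
-/

open Matrix BigOperators

/-- Ratios of entries in a column `j` of `B⁻¹` can be read off any `v` which `B` maps to a nonzero
multiple of the `j`-th basis vector. -/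
lemma inv_apply_div_of_mulVec_eq_single {n : Type*} [Fintype n] [DecidableEq n]
    {B : Matrix n n ℝ} (hB : IsUnit B) {v : n → ℝ} {j : n} {k : ℝ} (hk : k ≠ 0)
    (h : B *ᵥ v = Pi.single j k) (i l : n) : B⁻¹ i j / B⁻¹ l j = v i / v l := by
  have hdet := (Matrix.isUnit_iff_isUnit_det B).1 hB
  have hv : B⁻¹ *ᵥ Pi.single j k = v := by
    rw [← h, Matrix.mulVec_mulVec, Matrix.nonsing_inv_mul B hdet, Matrix.one_mulVec]
  have hcol : ∀ m, v m = B⁻¹ m j * k := fun m => by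
    rw [← hv, Matrix.mulVec_single]
    simp
  rw [hcol i, hcol l, mul_div_mul_right _ _ hk]

/-- Example 1: for the 9×5 observation matrix `M` and noise covariance
`Σ = diag(1,1,v^q_o,v^q_o,1,1,1,v^a_o,v^a_o)`, with `B = MᵀΣ⁻¹M`,
`(B⁻¹)_{31}/(B⁻¹)_{11} = (B⁻¹)_{41}/(B⁻¹)_{11} = −2v^a_o/(5v^q_o + 5v^a_o + 4)` and
`(B⁻¹)_{51}/(B⁻¹)_{11} = −2(v^q_o + v^a_o)/(5v^q_o + 5v^a_o + 4)`. -/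
theorem stmt17 (vqo vao : ℝ) (hvqo : 0 < vqo) (hvao : 0 < vao) :
    let M : Matrix (Fin 9) (Fin 5) ℝ :=
      !![1, 0, 0, 0,  1;
         0, 1, 0, 0,  1;
         0, 0, 1, 0, -1;
         0, 0, 0, 1, -1;
         0, 0, 0, 0,  1;
         1, 0, 0, 0,  0;
         0, 1, 0, 0,  0;
         0, 0, 1, 0,  0;
         0, 0, 0, 1,  0]
    let S : Matrix (Fin 9) (Fin 9) ℝ :=
      Matrix.diagonal ![1, 1, vqo, vqo, 1, 1, 1, vao, vao]
    let B : Matrix (Fin 5) (Fin 5) ℝ := Mᵀ * S⁻¹ * M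
    B⁻¹ 2 0 / B⁻¹ 0 0 = -2 * vao / (5 * vqo + 5 * vao + 4) ∧
    B⁻¹ 3 0 / B⁻¹ 0 0 = -2 * vao / (5 * vqo + 5 * vao + 4) ∧
    B⁻¹ 4 0 / B⁻¹ 0 0 = -2 * (vqo + vao) / (5 * vqo + 5 * vao + 4) := by
  intro M S B
  have hS : S.PosDef := by
    refine Matrix.PosDef.diagonal fun i => ?_
    fin_cases i <;> simp [hvqo, hvao]
  have hM : Function.Injective M.mulVec := by
    intro x y hxy
    -- Rows 4 to 8 of `M` (counting from 0) are the five basis vectors, so they recover every coordinate.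
    have h0 := congrFun hxy 5
    have h1 := congrFun hxy 6
    have h2 := congrFun hxy 7
    have h3 := congrFun hxy 8
    have h4 := congrFun hxy 4
    simp [M, Matrix.mulVec, dotProduct, Fin.sum_univ_succ] at h0 h1 h2 h3 h4
    ext i
    fin_cases i <;> assumption
  have hB : IsUnit B := by
    have := hS.inv.conjTranspose_mul_mul_same hM
    rw [Matrix.conjTranspose_eq_transpose_of_trivial] at this
    exact this.isUnit
  set s := vqo + vao with hs
  let v : Fin 5 → ℝ := ![5 * s + 4, s, -2 * vao, -2 * vao, -2 * s]
  let u : Fin 9 → ℝ := ![3 * s + 4, -s, 2, 2, -2 * s, 5 * s + 4, s, -2, -2]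
  have hSu : M *ᵥ v = S *ᵥ u := by
    ext i
    fin_cases i <;>
      simp [M, S, u, v, Matrix.mulVec, dotProduct, Fin.sum_univ_succ,
        Matrix.diagonal_apply, hs] <;> ring
  have hMu : Mᵀ *ᵥ u = Pi.single 0 (8 * (s + 1)) := by
    ext i
    fin_cases i <;> simp [M, u, Matrix.mulVec, dotProduct, Fin.sum_univ_succ] <;> ring
  have hBv : B *ᵥ v = Pi.single 0 (8 * (s + 1)) := by
    have hdet := (Matrix.isUnit_iff_isUnit_det S).1 hS.isUnit
    rw [← hMu, ← Matrix.mulVec_mulVec, hSu, ← Matrix.mulVec_mulVec, Matrix.mulVec_mulVec u S⁻¹ S,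
      Matrix.nonsing_inv_mul S hdet, Matrix.one_mulVec]
  have hk : 8 * (s + 1) ≠ 0 := by positivity
  have key := fun i => inv_apply_div_of_mulVec_eq_single hB hk hBv i 0
  have hden : 5 * vqo + 5 * vao + 4 = v 0 := by
    simp only [v, hs, Matrix.cons_val_zero]
    ring
  rw [hden]
  exact ⟨key 2, key 3, key 4⟩
end

section
/- Let v^q_1, v^η_1 > 0. Let M be the 4×4 real matrix with rows (1,0,1,0), (0,1,−1,0), (0,1,0,1), (0,0,1,0), and let Σ = diag(v^q_1, 1, 1, v^η_1). Set B = MᵀΣ⁻¹M, a 4×4 positive definite matrix. Then (B⁻¹)_{31}/(B⁻¹)_{11} = −v^η_1 / (v^η_1 + v^q_1) and (B⁻¹)_{41}/(B⁻¹)_{11} = v^η_1 / (v^η_1 + v^q_1). -/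
/-! The matrix `M` is unimodular with an explicit inverse `N`: solving the noiseless observation
equations gives `θ₁ = η₁`, `a'₁ = q₁ - η₁`, `a'₂ = q₂ + η₁`, `a₂ = b₂ - q₂ - η₁`. Hence
`B⁻¹ = N Σ Nᵀ`, whose entries in the first column are `v^q_1 + v^η_1` (row 1), `-v^η_1` (row 3)
and `v^η_1` (row 4). -/

open Matrix BigOperators

/-- Example 2, multi-dimensional attributes: for the 4×4 observation
matrix `M` and noise covariance `Σ = diag(v^q_1, 1, 1, v^η_1)`, with `B = MᵀΣ⁻¹M`,
`(B⁻¹)_{31}/(B⁻¹)_{11} = −v^η_1/(v^η_1 + v^q_1)` and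
`(B⁻¹)_{41}/(B⁻¹)_{11} = v^η_1/(v^η_1 + v^q_1)`. -/
theorem stmt18 (vq1 vη1 : ℝ) (hvq1 : 0 < vq1) (hvη1 : 0 < vη1) :
    let M : Matrix (Fin 4) (Fin 4) ℝ :=
      !![1, 0,  1, 0;
         0, 1, -1, 0;
         0, 1,  0, 1;
         0, 0,  1, 0]
    let S : Matrix (Fin 4) (Fin 4) ℝ := Matrix.diagonal ![vq1, 1, 1, vη1]
    let B : Matrix (Fin 4) (Fin 4) ℝ := Mᵀ * S⁻¹ * M
    B⁻¹ 2 0 / B⁻¹ 0 0 = -vη1 / (vη1 + vq1) ∧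
    B⁻¹ 3 0 / B⁻¹ 0 0 = vη1 / (vη1 + vq1) := by
  intro M S B
  let N : Matrix (Fin 4) (Fin 4) ℝ :=
    !![1,  0, 0, -1;
       0,  1, 0,  1;
       0,  0, 0,  1;
       0, -1, 1, -1]
  have hM : M⁻¹ = N := by
    apply Matrix.inv_eq_right_inv
    ext i j
    fin_cases i <;> fin_cases j <;> simp [M, N, Matrix.mul_apply, Fin.sum_univ_four]
  have hS : IsUnit S.det := by
    simp [S, Matrix.det_diagonal, Fin.prod_univ_four, hvq1.ne', hvη1.ne']
  have hB : B⁻¹ = N * S * Nᵀ := by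
    simp only [B, Matrix.mul_inv_rev, Matrix.nonsing_inv_nonsing_inv S hS,
      ← Matrix.transpose_nonsing_inv, hM, Matrix.mul_assoc]
  have h00 : B⁻¹ 0 0 = vη1 + vq1 := by
    rw [hB]
    simp [N, S, Matrix.mul_apply, Fin.sum_univ_four, Matrix.vecMul_diagonal, add_comm]
  have h20 : B⁻¹ 2 0 = -vη1 := by
    rw [hB]
    simp [N, S, Matrix.mul_apply, Fin.sum_univ_four, Matrix.vecMul_diagonal]
  have h30 : B⁻¹ 3 0 = vη1 := by
    rw [hB]
    simp [N, S, Matrix.mul_apply, Fin.sum_univ_four, Matrix.vecMul_diagonal]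
  rw [h00, h20, h30]
  exact ⟨rfl, rfl⟩
end
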